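/- arXiv:2104.12116 — 2 statements merged into one kernel-verified Lean document; each statement's English description precedes it below -/
import Mathlib

section
/- Let $X$ be a finite type, let $\psi : X \to \mathrm{Bool}$ assign each point to one of two demographic groups, and let $t \ge 0$ be a real number. For a finite set $S \subseteq X$ with both groups nonempty in $S$, define $balance(S) = \min\bigl(|\{x \in S : \psi(x) = \mathrm{true}\}| / |\{x \in S : \psi(x) = \mathrm{false}\}|,\; |\{x \in S : \psi(x) = \mathrm{false}\}| / |\{x \in S : \psi(x) = \mathrm{true}\}|\bigr)$ (real-valued division of cardinalities). If $F_1, \dots, F_l$ ($l \ge 1$) are pairwise disjoint finite subsets of $X$, each containing at least one point of each group and each satisfying $balance(F_j) \ge t$, then $balance(F_1 \cup \cdots \cup F_l) \ge t$. -/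
/-- The balance of a finite set `S` w.r.t. a binary group assignment `ψ`:
the minimum of the two ratios of group cardinalities (Eq. 3 of the paper). -/
noncomputable def balance {X : Type*} [DecidableEq X] (ψ : X → Bool) (S : Finset X) : ℝ :=
  min ((((S.filter fun x => ψ x = true).card : ℝ)) / (((S.filter fun x => ψ x = false).card : ℝ)))
      ((((S.filter fun x => ψ x = false).card : ℝ)) / (((S.filter fun x => ψ x = true).card : ℝ)))

theorem balance_biUnion_fairlets_ge {X : Type*} [Fintype X] [DecidableEq X]
    (ψ : X → Bool) (t : ℝ) (ht : 0 ≤ t)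
    (l : ℕ) (hl : 1 ≤ l) (F : Fin l → Finset X)
    (hdisj : ∀ i j, i ≠ j → Disjoint (F i) (F j))
    (hboth : ∀ j, (∃ x ∈ F j, ψ x = true) ∧ (∃ x ∈ F j, ψ x = false))
    (hbal : ∀ j, balance ψ (F j) ≥ t) :
    balance ψ (Finset.univ.biUnion F) ≥ t := by
  have key : ∀ b : Bool, (((Finset.univ.biUnion F).filter fun x => ψ x = b).card : ℝ)
      = ∑ j, (((F j).filter fun x => ψ x = b).card : ℝ) := by
    intro b
    rw [Finset.filter_biUnion, Finset.card_biUnion]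
    · push_cast
      rfl
    · intro i _ j _ hij
      exact Finset.disjoint_filter_filter (hdisj i j hij)
  have hpos : ∀ (b : Bool) (j : Fin l), (0 : ℝ) < (((F j).filter fun x => ψ x = b).card : ℝ) := by
    intro b j
    rw [Nat.cast_pos, Finset.card_pos]
    cases b
    · obtain ⟨x, hx, h⟩ := (hboth j).2
      exact ⟨x, Finset.mem_filter.2 ⟨hx, h⟩⟩
    · obtain ⟨x, hx, h⟩ := (hboth j).1
      exact ⟨x, Finset.mem_filter.2 ⟨hx, h⟩⟩
  have hsum : ∀ b : Bool, (0 : ℝ) < ∑ j, (((F j).filter fun x => ψ x = b).card : ℝ) :=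
    fun b => Finset.sum_pos (fun j _ => hpos b j) ⟨⟨0, hl⟩, Finset.mem_univ _⟩
  unfold balance at hbal ⊢
  rw [key true, key false, ge_iff_le, le_min_iff, le_div_iff₀ (hsum false),
    le_div_iff₀ (hsum true), Finset.mul_sum, Finset.mul_sum]
  constructor
  · refine Finset.sum_le_sum fun j _ => ?_
    exact (le_div_iff₀ (hpos false j)).1 (le_min_iff.1 (hbal j)).1
  · refine Finset.sum_le_sum fun j _ => ?_
    exact (le_div_iff₀ (hpos true j)).1 (le_min_iff.1 (hbal j)).2
end

section
/- Let $t \ge 0$ be a real number, let $X$ be a finite type with group assignment $\psi : X \to \mathrm{Bool}$, and for a finite set $S \subseteq X$ containing points of both groups define $balance(S) = \min\bigl(|\{x \in S : \psi(x) = \mathrm{true}\}| / |\{x \in S : \psi(x) = \mathrm{false}\}|,\; |\{x \in S : \psi(x) = \mathrm{false}\}| / |\{x \in S : \psi(x) = \mathrm{true}\}|\bigr)$ (real-valued division of cardinalities). Suppose $F_1, \dots, F_l$ are pairwise disjoint finite subsets of $X$, each containing at least one point of each group and each satisfying $balance(F_j) \ge t$. Let $C_1, \dots, C_k$ be clusters,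 each of which is a union of a nonempty subfamily of the fairlets, with every fairlet assigned to exactly one cluster. Then $\min_{1 \le i \le k} balance(C_i) \ge t$. -/
theorem clustering_balance_ge_of_fairlets {X : Type*} [Fintype X] [DecidableEq X]
    (ψ : X → Bool) (t : ℝ) (ht : 0 ≤ t)
    (l : ℕ) (F : Fin l → Finset X)
    (hdisj : ∀ i j, i ≠ j → Disjoint (F i) (F j))
    (hboth : ∀ j, (∃ x ∈ F j, ψ x = true) ∧ (∃ x ∈ F j, ψ x = false))
    (hbal : ∀ j, balance ψ (F j) ≥ t)
    (k : ℕ) (hk : 0 < k)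
    (δ : Fin l → Fin k) (hsurj : Function.Surjective δ)
    (C : Fin k → Finset X)
    (hC : ∀ i, C i = (Finset.univ.filter fun j => δ j = i).biUnion F) :
    Finset.univ.inf' (Finset.univ_nonempty_iff.mpr ⟨⟨0, hk⟩⟩)
      (fun i => balance ψ (C i)) ≥ t := by
  have hcard : ∀ (b : Bool) (i : Fin k), (((C i).filter fun x => ψ x = b).card : ℝ)
      = ∑ j ∈ Finset.univ.filter (fun j => δ j = i), (((F j).filter fun x => ψ x = b).card : ℝ) := by
    intro b i
    rw [hC i, Finset.filter_biUnion, Finset.card_biUnion]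
    · push_cast
      rfl
    · intro a _ c _ hac
      exact Finset.disjoint_filter_filter (hdisj a c hac)
  have hpos : ∀ (b : Bool) (j : Fin l), (0 : ℝ) < (((F j).filter fun x => ψ x = b).card : ℝ) := by
    intro b j
    rw [Nat.cast_pos, Finset.card_pos]
    cases b
    · obtain ⟨x, hx, hb⟩ := (hboth j).2
      exact ⟨x, Finset.mem_filter.mpr ⟨hx, hb⟩⟩
    · obtain ⟨x, hx, hb⟩ := (hboth j).1
      exact ⟨x, Finset.mem_filter.mpr ⟨hx, hb⟩⟩
  have hposC : ∀ (b : Bool) (i : Fin k), (0 : ℝ) < (((C i).filter fun x => ψ x = b).card : ℝ) := by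
    intro b i
    rw [hcard]
    obtain ⟨j, hj⟩ := hsurj i
    exact Finset.sum_pos (fun j _ => hpos b j) ⟨j, by simp [hj]⟩
  refine Finset.le_inf' _ _ fun i _ => ?_
  unfold balance
  refine le_min ?_ ?_
  · rw [le_div_iff₀ (hposC false i), hcard, hcard, Finset.mul_sum]
    refine Finset.sum_le_sum fun j _ => ?_
    rw [← le_div_iff₀ (hpos false j)]
    exact (hbal j).le.trans (min_le_left _ _)
  · rw [le_div_iff₀ (hposC true i), hcard, hcard, Finset.mul_sum]
    refine Finset.sum_le_sum fun j _ => ?_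
    rw [← le_div_iff₀ (hpos true j)]
    exact (hbal j).le.trans (min_le_right _ _)
end
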